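/- For every integer n ≥ 0 and every real x with 0 ≤ x < 1, the rescaled Atkin polynomials satisfy 𝓐_{n+1}(x) = C(x)·Ũ_n^{(1/2,−2/3)}(x;7/12) + D(x)·Ỹ_n^{(1/2,−2/3)}(x;7/12). -/

import Mathlib

noncomputable section

/-- Rising factorial (Pochhammer symbol) `(a)_n = a(a+1)⋯(a+n-1)`. -/
def poch (a : ℝ) (n : ℕ) : ℝ := ∏ i ∈ Finset.range n, (a + (i : ℝ))

/-- The rescaled Atkin polynomials `𝓐_n`. -/
def Atkin : ℕ → ℝ → ℝ
  | 0, _ => 1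
  | 1, x => x - 5/12
  | 2, x => x^2 - (205/216) * x + 935/10368
  | n + 3, x =>
      (x - 2 * (((n : ℝ) + 2)^2 - 29/144) / (4 * ((n : ℝ) + 2)^2 - 1)) * Atkin (n + 2) x
      - ((((n : ℝ) + 2) - 13/12) * (((n : ℝ) + 2) - 7/12) * (((n : ℝ) + 2) - 5/12)
          * (((n : ℝ) + 2) + 1/12)
         / (2 * ((n : ℝ) + 2) * (2 * ((n : ℝ) + 2) - 1)^2 * (2 * ((n : ℝ) + 2) - 2)))
        * Atkin (n + 1) x

/-- The Gauss hypergeometric series `F(a,b;c;x) = Σ_{k≥0} (a)_k (b)_k / ((c)_k k!) xᵏ`. -/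
def hyp (a b c x : ℝ) : ℝ :=
  ∑' k : ℕ, poch a k * poch b k / (poch c k * (Nat.factorial k : ℝ)) * x ^ k

/-- `U_n^{(α,β)}(x;c)`. -/
def Ufun (α β c : ℝ) (n : ℕ) (x : ℝ) : ℝ :=
  (-1 : ℝ)^n * (poch (β + c + 1) n / poch (c + 1) n)
    * hyp (-(n:ℝ) - c) ((n:ℝ) + α + β + c + 1) (1 + β) x

/-- `Ũ_n^{(α,β)}(x;c)`. -/
def Ut (α β c : ℝ) (n : ℕ) (x : ℝ) : ℝ :=
  (poch (c + 1) n * poch (α + β + c + 1) n / poch (α + β + 2*c + 1) (2*n)) * Ufun α β c n x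

/-- `Y_n^{(α,β)}(x;c)`. -/
def Yfun (α β c : ℝ) (n : ℕ) (x : ℝ) : ℝ :=
  (-1 : ℝ)^n * (poch (α + c + 1) n / poch (α + β + c + 1) n)
    * hyp (-(n:ℝ) - β - c) ((n:ℝ) + α + c + 1) (1 - β) x

/-- `Ỹ_n^{(α,β)}(x;c)`. -/
def Yt (α β c : ℝ) (n : ℕ) (x : ℝ) : ℝ :=
  (poch (c + 1) n * poch (α + β + c + 1) n / poch (α + β + 2*c + 1) (2*n)) * Yfun α β c n x

/-- The function `C(x)` of Theorem 5.2. -/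
def Cfun (x : ℝ) : ℝ :=
  -(1/60) * (24 * hyp (-5/12) (-5/12) (-1/3) x + hyp (-5/12) (-5/12) (2/3) x)

/-- The function `D(x)` of Theorem 5.2. -/
def Dfun (x : ℝ) : ℝ :=
  (91/384) * x * (4 * hyp (-1/12) (-1/12) (1/3) x - 5 * hyp (11/12) (-1/12) (4/3) x)

/-! ### Power series infrastructure -/

/-- Coefficient sequences of power series converging on `|x| < 1`. -/
def Good (t : ℕ → ℝ) : Prop := ∀ r : ℝ, 0 ≤ r → r < 1 → Summable fun k => |t k| * r ^ k

/-- Sum of a power series. -/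
def PS (t : ℕ → ℝ) (x : ℝ) : ℝ := ∑' k, t k * x ^ k

/-- Coefficients of the derivative. -/
def dc (t : ℕ → ℝ) (k : ℕ) : ℝ := ((k : ℝ) + 1) * t (k + 1)

lemma Good.summable {t : ℕ → ℝ} (h : Good t) {x : ℝ} (hx : |x| < 1) :
    Summable fun k => t k * x ^ k := by
  refine Summable.of_norm ?_
  simpa [abs_mul, abs_pow] using h |x| (abs_nonneg x) hx

lemma Good.dc {t : ℕ → ℝ} (h : Good t) : Good (dc t) := by
  intro r hr0 hr1
  obtain ⟨s, hrs, hs1⟩ := exists_between hr1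
  have hs0 : 0 < s := lt_of_le_of_lt hr0 hrs
  have hq : |r / s| < 1 := by
    rw [abs_of_nonneg (by positivity), div_lt_one hs0]; exact hrs
  have h1 : Filter.Tendsto (fun k : ℕ => (k : ℝ) * (r / s) ^ k) Filter.atTop (nhds 0) :=
    tendsto_self_mul_const_pow_of_abs_lt_one hq
  have h2 : Filter.Tendsto (fun k : ℕ => (r / s) ^ k) Filter.atTop (nhds 0) :=
    tendsto_pow_atTop_nhds_zero_of_abs_lt_one hq
  have h3 := h1.add h2
  have h4 : ∀ᶠ k : ℕ in Filter.atTop, (k : ℝ) * (r / s) ^ k + (r / s) ^ k < 1 := by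
    apply h3.eventually_lt_const; norm_num
  have h5 : Summable fun k => (|t (k + 1)| * s ^ (k + 1)) * s⁻¹ :=
    ((summable_nat_add_iff 1).2 (h s hs0.le hs1)).mul_right _
  refine Summable.of_norm_bounded_eventually_nat h5 ?_
  filter_upwards [h4] with k hk
  have hsk : 0 < s ^ k := by positivity
  have e1 : (r / s) ^ k = r ^ k / s ^ k := div_pow _ _ _
  have hk' : ((k : ℝ) + 1) * r ^ k ≤ s ^ k := by
    have : ((k : ℝ) + 1) * r ^ k / s ^ k < 1 := by rw [e1] at hk; convert hk using 1; ring
    rw [div_lt_one hsk] at this; exact this.le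
  have e2 : |t (k + 1)| * s ^ (k + 1) * s⁻¹ = |t (k + 1)| * s ^ k := by
    rw [pow_succ]; field_simp
  rw [e2, Real.norm_eq_abs, abs_of_nonneg (by positivity), _root_.dc, abs_mul,
    abs_of_nonneg (by positivity : (0:ℝ) ≤ (k:ℝ) + 1)]
  calc ((k:ℝ) + 1) * |t (k + 1)| * r ^ k = |t (k + 1)| * (((k:ℝ) + 1) * r ^ k) := by ring
    _ ≤ _ := by gcongr

lemma PS_succ {t : ℕ → ℝ} (h : Good t) {x : ℝ} (hx : |x| < 1) :
    PS t x = t 0 + x * PS (fun k => t (k + 1)) x := by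
  unfold PS
  rw [(h.summable hx).tsum_eq_zero_add, ← tsum_mul_left]
  simp only [pow_zero, mul_one]
  congr 2; ext k; ring

lemma hasDerivAt_PS {t : ℕ → ℝ} (h : Good t) {x : ℝ} (hx : |x| < 1) :
    HasDerivAt (PS t) (PS (dc t) x) x := by
  obtain ⟨r, hxr, hr1⟩ := exists_between hx
  have hr0 : 0 < r := lt_of_le_of_lt (abs_nonneg x) hxr
  have key : HasDerivAt (fun z => ∑' k, t k * z ^ k) (∑' k, t k * ((k : ℝ) * x ^ (k - 1))) x := by
    have s0 : Summable fun k => t k * (0:ℝ) ^ k := h.summable (by simp)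
    have mx : x ∈ Metric.ball (0:ℝ) r := by simpa using hxr
    refine hasDerivAt_tsum_of_isPreconnected (u := fun k => |t k| * ((k : ℝ) * r ^ (k - 1)))
      (g := fun k z => t k * z ^ k) (g' := fun k z => t k * ((k : ℝ) * z ^ (k - 1)))
      (t := Metric.ball (0:ℝ) r) (y₀ := (0:ℝ)) ?_ Metric.isOpen_ball
      (convex_ball (0:ℝ) r).isPreconnected ?_ ?_ (Metric.mem_ball_self hr0) s0 mx
    · rw [← summable_nat_add_iff 1]
      refine (h.dc r hr0.le hr1).congr fun k => ?_
      rw [_root_.dc, abs_mul, abs_of_nonneg (by positivity : (0:ℝ) ≤ (k:ℝ) + 1)]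
      push_cast
      ring
    · intro k y _
      exact (hasDerivAt_pow k y).const_mul (t k)
    · intro k y hy
      have hy' : |y| ≤ r := by simpa using (Metric.mem_ball.1 hy).le
      rw [norm_mul, norm_mul, norm_pow, Real.norm_eq_abs, Real.norm_eq_abs, Real.norm_eq_abs,
        Nat.abs_cast]
      gcongr
  have e : ∑' k, t k * ((k : ℝ) * x ^ (k - 1)) = PS (dc t) x := by
    unfold PS
    have hs : Summable fun k => t k * ((k : ℝ) * x ^ (k - 1)) := by
      rw [← summable_nat_add_iff 1]
      refine (h.dc.summable hx).congr fun k => ?_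
      simp only [_root_.dc, Nat.add_sub_cancel]; push_cast; ring
    rw [hs.tsum_eq_zero_add]
    simp only [_root_.dc, Nat.add_sub_cancel]; push_cast
    rw [zero_mul, mul_zero, zero_add]
    congr 1; ext k; ring
  rw [← e]; exact key

/-! ### Hypergeometric coefficients -/

/-- Coefficients of the Gauss series. -/
def hc (a b c : ℝ) (k : ℕ) : ℝ := poch a k * poch b k / (poch c k * (Nat.factorial k : ℝ))

lemma hyp_eq (a b c x : ℝ) : hyp a b c x = PS (hc a b c) x := rfl

lemma poch_succ (a : ℝ) (k : ℕ) : poch a (k + 1) = poch a k * (a + k) := by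
  simp [poch, Finset.prod_range_succ]

lemma poch_zero (a : ℝ) : poch a 0 = 1 := by simp [poch]

lemma poch_succ' (a : ℝ) (k : ℕ) : poch a (k + 1) = a * poch (a + 1) k := by
  simp only [poch, Finset.prod_range_succ']
  push_cast
  rw [add_zero, mul_comm]; congr 1
  refine Finset.prod_congr rfl fun i _ => by ring

lemma poch_shift (a : ℝ) (k : ℕ) : a * poch (a + 1) k = poch a k * (a + k) := by
  rw [← poch_succ', poch_succ]

lemma poch_ne {c : ℝ} (hc : ∀ k : ℕ, c + k ≠ 0) (k : ℕ) : poch c k ≠ 0 :=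
  Finset.prod_ne_zero_iff.2 fun i _ => hc i

lemma hc_zero (a b c : ℝ) : hc a b c 0 = 1 := by simp [hc, poch_zero]

lemma hc_succ (a b c : ℝ) (k : ℕ) :
    hc a b c (k + 1) = hc a b c k * ((a + k) * (b + k) / ((c + k) * ((k : ℝ) + 1))) := by
  simp only [hc, poch_succ, Nat.factorial_succ, Nat.cast_mul, Nat.cast_succ]
  rw [div_mul_div_comm]; congr 1 <;> ring

lemma ratio_tendsto (a c : ℝ) :
    Filter.Tendsto (fun k : ℕ => (a + k) / (c + k)) Filter.atTop (nhds 1) := by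
  have h1 : Filter.Tendsto (fun k : ℕ => (c + (k:ℝ))) Filter.atTop Filter.atTop :=
    Filter.tendsto_atTop_add_const_left _ _ tendsto_natCast_atTop_atTop
  have h2 : Filter.Tendsto (fun k : ℕ => 1 + (a - c) / (c + (k:ℝ))) Filter.atTop (nhds (1 + 0)) :=
    tendsto_const_nhds.add (h1.const_div_atTop _)
  rw [add_zero] at h2
  refine h2.congr' ?_
  filter_upwards [h1.eventually_gt_atTop 0] with k hk
  field_simp; ring

lemma good_hc (a b c : ℝ) : Good (hc a b c) := by
  intro r hr0 hr1
  obtain ⟨s, hrs, hs1⟩ := exists_between hr1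
  have hs0 : 0 < s := lt_of_le_of_lt hr0 hrs
  have h1 : Filter.Tendsto (fun k : ℕ => |((a + k) / (c + k)) * ((b + k) / ((1:ℝ) + k))| * r)
      Filter.atTop (nhds (|1 * 1| * r)) :=
    (((ratio_tendsto a c).mul (ratio_tendsto b 1)).abs).mul_const r
  have h2 := h1.eventually_le_const (u := s) (v := |1 * 1| * r) (by simpa using hrs)
  refine summable_of_ratio_norm_eventually_le hs1 (h2.mono fun k hk => ?_)
  have e : hc a b c (k + 1) = hc a b c k * (((a + k) / (c + k)) * ((b + k) / ((1:ℝ) + k))) := by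
    rw [hc_succ, div_mul_div_comm, add_comm (1:ℝ)]
  generalize ((a + k) / (c + k)) * ((b + k) / ((1:ℝ) + k)) = q at e hk
  rw [e, norm_mul, norm_mul, norm_pow, norm_pow]
  simp only [Real.norm_eq_abs, abs_abs, abs_mul, abs_of_nonneg hr0]
  calc _ = (|q| * r) * (|hc a b c k| * r ^ k) := by ring
    _ ≤ _ := by gcongr

/-- A generic comparison lemma `PS e x = x * PS f x`. -/
lemma PS_eq_mul {e f : ℕ → ℝ} (he : Good e) (h0 : e 0 = 0) (hs : ∀ k, e (k + 1) = f k)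
    {x : ℝ} (hx : |x| < 1) : PS e x = x * PS f x := by
  rw [PS_succ he hx, h0, zero_add]
  congr 2; ext k; exact hs k

lemma Good.add {s t : ℕ → ℝ} (hs : Good s) (ht : Good t) : Good fun k => s k + t k := by
  intro r h0 h1
  refine Summable.of_nonneg_of_le (fun k => by positivity) (fun k => ?_)
    ((hs r h0 h1).add (ht r h0 h1))
  rw [← add_mul]; gcongr; exact abs_add_le _ _

lemma Good.smul {t : ℕ → ℝ} (m : ℝ) (ht : Good t) : Good fun k => m * t k := by
  intro r h0 h1
  refine ((ht r h0 h1).mul_left |m|).congr fun k => ?_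
  rw [abs_mul]; ring

lemma PS_add {s t : ℕ → ℝ} (hs : Good s) (ht : Good t) {x : ℝ} (hx : |x| < 1) :
    PS (fun k => s k + t k) x = PS s x + PS t x := by
  unfold PS
  rw [← (hs.summable hx).tsum_add (ht.summable hx)]
  congr 1; ext k; ring

lemma PS_smul (t : ℕ → ℝ) (m x : ℝ) : PS (fun k => m * t k) x = m * PS t x := by
  unfold PS
  rw [← tsum_mul_left]
  congr 1; ext k; ring

lemma Good.theta {t : ℕ → ℝ} (ht : Good t) : Good fun k => (k : ℝ) * t k := by
  intro r h0 h1
  rw [← summable_nat_add_iff 1]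
  refine ((ht.dc r h0 h1).mul_right r).congr fun k => ?_
  simp only [_root_.dc]; push_cast; ring

lemma PS_theta {t : ℕ → ℝ} (ht : Good t) {x : ℝ} (hx : |x| < 1) :
    PS (fun k => (k : ℝ) * t k) x = x * PS (dc t) x :=
  PS_eq_mul ht.theta (by simp) (fun k => by simp [dc]) hx

lemma hc_rec (a b c : ℝ) (hcn : ∀ k : ℕ, c + k ≠ 0) (k : ℕ) :
    ((k : ℝ) + 1) * (c + k) * hc a b c (k + 1) = (a + k) * (b + k) * hc a b c k := by
  rw [hc_succ]
  have := hcn k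
  have : (k : ℝ) + 1 ≠ 0 := by positivity
  field_simp

/-- The hypergeometric ODE. -/
lemma hyp_ode (a b c : ℝ) (hcn : ∀ k : ℕ, c + k ≠ 0) {x : ℝ} (hx : |x| < 1) :
    x * (1 - x) * PS (dc (dc (hc a b c))) x + (c - (a + b + 1) * x) * PS (dc (hc a b c)) x
      - a * b * PS (hc a b c) x = 0 := by
  have g := good_hc a b c
  set t := hc a b c with ht
  have e1 : x * PS (dc (dc t)) x = PS (fun k => (k : ℝ) * dc t k) x := (PS_theta g.dc hx).symm
  have e2 : x * PS (dc t) x = PS (fun k => (k : ℝ) * t k) x := (PS_theta g hx).symm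
  have e3 : x * PS (fun k => (k : ℝ) * dc t k) x
      = PS (fun k => (k : ℝ) * ((k : ℝ) * t k) + (-1) * ((k : ℝ) * t k)) x := by
    refine (PS_eq_mul (g.theta.theta.add (g.theta.smul _)) (by simp) (fun k => ?_) hx).symm
    simp only [dc]; push_cast; ring
  rw [PS_add g.theta.theta (g.theta.smul _) hx, PS_smul] at e3
  have e4 : PS (fun k => ((k : ℝ) * dc t k + c * dc t k)) x =
      PS (fun k => ((k : ℝ) * ((k : ℝ) * t k) + (a + b) * ((k : ℝ) * t k)) + a * b * t k) x := by
    congr 1; ext k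
    have := hc_rec a b c hcn k
    rw [← ht] at this
    simp only [dc]; linear_combination this
  rw [PS_add g.dc.theta (g.dc.smul _) hx, PS_add (g.theta.theta.add (g.theta.smul _)) (g.smul _) hx,
    PS_add g.theta.theta (g.theta.smul _) hx, PS_smul, PS_smul, PS_smul] at e4
  linear_combination (1 - x) * e1 - e3 + e4 + (- (a + b + 1)) * e2

/-! ### Bilinear (Wronskian type) relations -/

lemma const_of_deriv {f f' : ℝ → ℝ} (hf : ∀ x, |x| < 1 → HasDerivAt f (f' x) x)
    (h0 : ∀ x, 0 < x → x < 1 → f' x = 0) {x : ℝ} (hx0 : 0 < x) (hx1 : x < 1) : f x = f 0 := by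
  have hab : ∀ y ∈ Set.Icc 0 x, |y| < 1 := fun y hy => by
    rw [abs_of_nonneg hy.1]; exact lt_of_le_of_lt hy.2 hx1
  obtain ⟨c, hc, h⟩ := exists_hasDerivAt_eq_slope f f' hx0
    (fun y hy => (hf y (hab y hy)).continuousAt.continuousWithinAt)
    (fun y hy => hf y (hab y ⟨hy.1.le, hy.2.le⟩))
  rw [h0 c hc.1 (hc.2.trans hx1), eq_comm, div_eq_zero_iff] at h
  rcases h with h | h <;> linarith

/-- A quartic polynomial given by its coefficients. -/
def pl (a b c d e x : ℝ) : ℝ := a + b * x + c * x ^ 2 + d * x ^ 3 + e * x ^ 4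

lemma hasDerivAt_pl (a b c d e x : ℝ) :
    HasDerivAt (pl a b c d e) (pl b (2 * c) (3 * d) (4 * e) 0 x) x := by
  have h1 := ((hasDerivAt_id x).const_mul b).const_add a
  have h2 := (hasDerivAt_pow 2 x).const_mul c
  have h3 := (hasDerivAt_pow 3 x).const_mul d
  have h4 := (hasDerivAt_pow 4 x).const_mul e
  refine HasDerivAt.congr_deriv (f := pl a b c d e) (((h1.add h2).add h3).add h4) ?_
  simp only [pl]; push_cast; ring

/-- A bilinear expression in two power series and their derivatives. -/
def bil (A₀ A₁ A₂ A₃ : ℝ → ℝ) (s t : ℕ → ℝ) (x : ℝ) : ℝ :=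
  A₀ x * (PS s x * PS t x) + A₁ x * (PS s x * PS (dc t) x) + A₂ x * (PS (dc s) x * PS t x)
    + A₃ x * (PS (dc s) x * PS (dc t) x)

lemma hasDerivAt_bil {A₀ A₁ A₂ A₃ : ℝ → ℝ} {s t : ℕ → ℝ} {a₀ a₁ a₂ a₃ x : ℝ}
    (h₀ : HasDerivAt A₀ a₀ x) (h₁ : HasDerivAt A₁ a₁ x) (h₂ : HasDerivAt A₂ a₂ x)
    (h₃ : HasDerivAt A₃ a₃ x) (hs : Good s) (ht : Good t) (hx : |x| < 1) :
    HasDerivAt (bil A₀ A₁ A₂ A₃ s t)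
      (a₀ * (PS s x * PS t x) + A₀ x * (PS (dc s) x * PS t x + PS s x * PS (dc t) x)
        + (a₁ * (PS s x * PS (dc t) x)
          + A₁ x * (PS (dc s) x * PS (dc t) x + PS s x * PS (dc (dc t)) x))
        + (a₂ * (PS (dc s) x * PS t x)
          + A₂ x * (PS (dc (dc s)) x * PS t x + PS (dc s) x * PS (dc t) x))
        + (a₃ * (PS (dc s) x * PS (dc t) x)
          + A₃ x * (PS (dc (dc s)) x * PS (dc t) x + PS (dc s) x * PS (dc (dc t)) x))) x := by
  have s0 := hasDerivAt_PS hs hx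
  have s1 := hasDerivAt_PS hs.dc hx
  have t0 := hasDerivAt_PS ht hx
  have t1 := hasDerivAt_PS ht.dc hx
  exact (((h₀.mul (s0.mul t0)).add (h₁.mul (s0.mul t1))).add (h₂.mul (s1.mul t0))).add
    (h₃.mul (s1.mul t1))

lemma PS_at_zero (t : ℕ → ℝ) : PS t 0 = t 0 := by
  unfold PS
  rw [tsum_eq_single 0 (fun k hk => by simp [hk])]; simp

/-- `P = F(-5/12,-5/12;2/3)`. -/
def tP : ℕ → ℝ := hc (-5/12) (-5/12) (2/3)
/-- `Q = F(-1/12,-1/12;4/3)`. -/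
def tQ : ℕ → ℝ := hc (-1/12) (-1/12) (4/3)
/-- `u = F(-7/12,17/12;1/3)`. -/
def tU : ℕ → ℝ := hc (-7/12) (17/12) (1/3)
/-- `y = F(1/12,25/12;5/3)`. -/
def tY : ℕ → ℝ := hc (1/12) (25/12) (5/3)

lemma gP : Good tP := good_hc _ _ _
lemma gQ : Good tQ := good_hc _ _ _
lemma gU : Good tU := good_hc _ _ _
lemma gY : Good tY := good_hc _ _ _
lemma zP : PS tP 0 = 1 := by rw [PS_at_zero]; exact hc_zero _ _ _
lemma zQ : PS tQ 0 = 1 := by rw [PS_at_zero]; exact hc_zero _ _ _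
lemma zU : PS tU 0 = 1 := by rw [PS_at_zero]; exact hc_zero _ _ _
lemma zY : PS tY 0 = 1 := by rw [PS_at_zero]; exact hc_zero _ _ _

lemma odeP {x : ℝ} (hx : |x| < 1) : x * (1 - x) * PS (dc (dc tP)) x
    + (2/3 - (-5/12 + -5/12 + 1) * x) * PS (dc tP) x - (-5/12) * (-5/12) * PS tP x = 0 :=
  hyp_ode _ _ _ (fun k => by positivity) hx
lemma odeQ {x : ℝ} (hx : |x| < 1) : x * (1 - x) * PS (dc (dc tQ)) x
    + (4/3 - (-1/12 + -1/12 + 1) * x) * PS (dc tQ) x - (-1/12) * (-1/12) * PS tQ x = 0 :=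
  hyp_ode _ _ _ (fun k => by positivity) hx
lemma odeU {x : ℝ} (hx : |x| < 1) : x * (1 - x) * PS (dc (dc tU)) x
    + (1/3 - (-7/12 + 17/12 + 1) * x) * PS (dc tU) x - (-7/12) * (17/12) * PS tU x = 0 :=
  hyp_ode _ _ _ (fun k => by positivity) hx
lemma odeY {x : ℝ} (hx : |x| < 1) : x * (1 - x) * PS (dc (dc tY)) x
    + (5/3 - (1/12 + 25/12 + 1) * x) * PS (dc tY) x - (1/12) * (25/12) * PS tY x = 0 :=
  hyp_ode _ _ _ (fun k => by positivity) hx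

lemma rel1 {x : ℝ} (hx0 : 0 < x) (hx1 : x < 1) :
    bil (pl (-455/1728) (35/144) 0 0 0) (pl 0 (5/12) (-5/12) 0 0) (pl 0 (7/12) (-7/12) 0 0)
      (pl 0 (-1/12) (-11/12) 1 0) tP tU x = -455/1728 := by
  rw [const_of_deriv (fun x hx => hasDerivAt_bil (hasDerivAt_pl _ _ _ _ _ _)
    (hasDerivAt_pl _ _ _ _ _ _) (hasDerivAt_pl _ _ _ _ _ _) (hasDerivAt_pl _ _ _ _ _ _)
    gP gU hx) ?_ hx0 hx1]
  · simp [bil, pl, zP, zU]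
  · intro x h0 h1
    have hx : |x| < 1 := by rwa [abs_of_pos h0]
    simp only [pl]
    linear_combination (5/12 * PS tP x - (x + 1/12) * PS (dc tP) x) * odeU hx
      + (7/12 * PS tU x - (x + 1/12) * PS (dc tU) x) * odeP hx

lemma rel4 {x : ℝ} (hx0 : 0 < x) (hx1 : x < 1) :
    bil (pl (-1/54) (1/192) (-1/144) 0 0) (pl 0 (-1/36) (1/9) (-1/12) 0)
      (pl 0 (-1/18) (-1/36) (1/12) 0) (pl 0 0 (-1/12) (-11/12) 1) tQ tY x = -1/54 := by
  rw [const_of_deriv (fun x hx => hasDerivAt_bil (hasDerivAt_pl _ _ _ _ _ _)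
    (hasDerivAt_pl _ _ _ _ _ _) (hasDerivAt_pl _ _ _ _ _ _) (hasDerivAt_pl _ _ _ _ _ _)
    gQ gY hx) ?_ hx0 hx1]
  · simp [bil, pl, zQ, zY]
  · intro x h0 h1
    have hx : |x| < 1 := by rwa [abs_of_pos h0]
    simp only [pl]
    linear_combination
      ((5/12 * x - 1/3 * (x + 1/12)) * PS tQ x - x * (x + 1/12) * PS (dc tQ) x) * odeY hx
      + ((7/12 * x - 2/3 * (x + 1/12)) * PS tY x - x * (x + 1/12) * PS (dc tY) x) * odeQ hx

/-- If `3 x g' + m g = 0` with `m ∈ {1,2}` then `x^m g^3` is constant, so `g = 0`. -/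
lemma zero_of_deriv {g g' : ℝ → ℝ} (m : ℕ) (hm : m ≠ 0)
    (hg : ∀ x, |x| < 1 → HasDerivAt g (g' x) x)
    (h0 : ∀ x, 0 < x → x < 1 → 3 * (x * g' x) + m * g x = 0) {x : ℝ} (hx0 : 0 < x) (hx1 : x < 1) :
    g x = 0 := by
  have h := const_of_deriv (f := fun x => x ^ m * g x ^ 3)
    (fun x hx => (hasDerivAt_pow m x).mul ((hg x hx).pow 3)) ?_ hx0 hx1
  · simp only [zero_pow hm, zero_mul] at h
    have : x ^ m ≠ 0 := by positivity
    simpa [this] using h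
  · intro x hx hx'
    obtain ⟨k, rfl⟩ := Nat.exists_eq_succ_of_ne_zero hm
    have := h0 x hx hx'
    simp only [Pi.pow_apply, Nat.succ_eq_add_one, Nat.add_sub_cancel, pow_succ]
    push_cast at this ⊢
    linear_combination x ^ k * g x ^ 2 * this

lemma rel2 {x : ℝ} (hx0 : 0 < x) (hx1 : x < 1) :
    bil (pl (25/1728) (-5/144) 0 0 0) (pl 0 (5/12) (-5/12) 0 0) (pl (-1/18) (-1/36) (1/12) 0 0)
      (pl 0 (-1/12) (-11/12) 1 0) tP tY x = 0 := by
  refine zero_of_deriv 2 two_ne_zero (fun x hx => hasDerivAt_bil (hasDerivAt_pl _ _ _ _ _ _)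
    (hasDerivAt_pl _ _ _ _ _ _) (hasDerivAt_pl _ _ _ _ _ _) (hasDerivAt_pl _ _ _ _ _ _)
    gP gY hx) ?_ hx0 hx1
  intro x h0 h1
  have hx : |x| < 1 := by rwa [abs_of_pos h0]
  simp only [pl, bil]; push_cast
  linear_combination
    3 * x * (5/12 * PS tP x - (x + 1/12) * PS (dc tP) x) * odeY hx
    + 3 * ((7/12 * x - 2/3 * (x + 1/12)) * PS tY x - x * (x + 1/12) * PS (dc tY) x) * odeP hx

lemma rel3 {x : ℝ} (hx0 : 0 < x) (hx1 : x < 1) :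
    bil (pl (-119/1728) (7/144) 0 0 0) (pl (-1/36) (1/9) (-1/12) 0 0) (pl 0 (7/12) (-7/12) 0 0)
      (pl 0 (-1/12) (-11/12) 1 0) tQ tU x = 0 := by
  refine zero_of_deriv 1 one_ne_zero (fun x hx => hasDerivAt_bil (hasDerivAt_pl _ _ _ _ _ _)
    (hasDerivAt_pl _ _ _ _ _ _) (hasDerivAt_pl _ _ _ _ _ _) (hasDerivAt_pl _ _ _ _ _ _)
    gQ gU hx) ?_ hx0 hx1
  intro x h0 h1
  have hx : |x| < 1 := by rwa [abs_of_pos h0]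
  simp only [pl, bil]; push_cast
  linear_combination
    3 * ((5/12 * x - 1/3 * (x + 1/12)) * PS tQ x - x * (x + 1/12) * PS (dc tQ) x) * odeU hx
    + 3 * x * (7/12 * PS tU x - (x + 1/12) * PS (dc tU) x) * odeQ hx

lemma alg22 {a₀ a₁ b₀ b₁ u₀ u₁ y₀ y₁ s t : ℝ} (hs : s ≠ 0) (ht : t ≠ 0)
    (h1 : a₀ * u₀ + a₁ * u₁ = s) (h2 : a₀ * y₀ + a₁ * y₁ = 0)
    (h3 : b₀ * u₀ + b₁ * u₁ = 0) (h4 : b₀ * y₀ + b₁ * y₁ = t) :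
    t * (u₀ * a₀) + s * (y₀ * b₀) = s * t ∧ t * (u₀ * a₁) + s * (y₀ * b₁) = 0 ∧
    t * (u₁ * a₀) + s * (y₁ * b₀) = 0 ∧ t * (u₁ * a₁) + s * (y₁ * b₁) = s * t := by
  have hst : s * t ≠ 0 := mul_ne_zero hs ht
  have hAB : (!![t * a₀, t * a₁; s * b₀, s * b₁] : Matrix (Fin 2) (Fin 2) ℝ) *
      ((s * t)⁻¹ • !![u₀, y₀; u₁, y₁]) = 1 := by
    rw [Matrix.mul_smul, inv_smul_eq_iff₀ hst]
    ext i j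
    fin_cases i <;> fin_cases j <;> simp [Matrix.mul_apply, Fin.sum_univ_two]
    · linear_combination t * h1
    · linear_combination t * h2
    · linear_combination s * h3
    · linear_combination s * h4
  have hBA := mul_eq_one_comm.1 hAB
  rw [Matrix.smul_mul, inv_smul_eq_iff₀ hst] at hBA
  have e00 := congrFun (congrFun hBA 0) 0
  have e01 := congrFun (congrFun hBA 0) 1
  have e10 := congrFun (congrFun hBA 1) 0
  have e11 := congrFun (congrFun hBA 1) 1
  simp [Matrix.mul_apply, Fin.sum_univ_two] at e00 e01 e10 e11
  refine ⟨?_, ?_, ?_, ?_⟩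
  · linear_combination e00
  · linear_combination e01
  · linear_combination e10
  · linear_combination e11

/-- The dual relations. -/
lemma dual {x : ℝ} (hx0 : 0 ≤ x) (hx1 : x < 1) :
    PS tP x * PS tU x + 455/32 * x * (PS tQ x * PS tY x) = 12 * x + 1 ∧
    x * PS (dc tP) x * PS tU x
      + 455/32 * x * ((x * PS (dc tQ) x + 1/3 * PS tQ x) * PS tY x) = 5 * x ∧
    PS tP x * (x * PS (dc tU) x)
      + 455/32 * x * (PS tQ x * (x * PS (dc tY) x + 2/3 * PS tY x)) = 7 * x ∧
    (1 - x) * (x * PS (dc tP) x * (x * PS (dc tU) x)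
      + 455/32 * x * ((x * PS (dc tQ) x + 1/3 * PS tQ x) * (x * PS (dc tY) x + 2/3 * PS tY x)))
      = 12 * x * (455/1728 - 35/144 * x) := by
  rcases hx0.eq_or_lt with h | hx0
  · subst h; simp [zP, zU]
  have r1 := rel1 hx0 hx1
  have r2 := rel2 hx0 hx1
  have r3 := rel3 hx0 hx1
  have r4 := rel4 hx0 hx1
  simp only [bil, pl] at r1 r2 r3 r4
  generalize PS (dc tP) x = p1 at *
  generalize PS tP x = p at *
  generalize PS (dc tQ) x = q1 at *
  generalize PS tQ x = q at *
  generalize PS (dc tU) x = u1 at *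
  generalize PS tU x = u at *
  generalize PS (dc tY) x = y1 at *
  generalize PS tY x = y at *
  obtain ⟨e1, e2, e3, e4⟩ := alg22
    (a₀ := (-455/1728 * x + 35/144 * x ^ 2) * p + 7/12 * x * (1 - x) * (x * p1))
    (a₁ := 5/12 * x * (1 - x) * p + (x - 1) * (x + 1/12) * (x * p1))
    (b₀ := (-455/1728 * x + 35/144 * x ^ 2) * q + 7/12 * x * (1 - x) * (x * q1 + 1/3 * q))
    (b₁ := 5/12 * x * (1 - x) * q + (x - 1) * (x + 1/12) * (x * q1 + 1/3 * q))
    (u₀ := u) (u₁ := x * u1) (y₀ := y) (y₁ := x * y1 + 2/3 * y)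
    (s := -455/1728 * x) (t := -1/54) (by simpa using hx0.ne') (by norm_num)
    (by linear_combination x * r1) (by linear_combination x * r2)
    (by linear_combination x * r3) (by linear_combination r4)
  have hd : x * (1 - x) * (455/20736) ≠ 0 := by
    have : 1 - x ≠ 0 := by linarith
    simp [hx0.ne', this]
  refine ⟨mul_left_cancel₀ hd ?_, mul_left_cancel₀ hd ?_, mul_left_cancel₀ hd ?_,
    mul_left_cancel₀ hd ?_⟩
  · linear_combination -54 * ((x - 1) * (x + 1/12) * e1 - 7/12 * x * (1 - x) * e2)
  · linear_combination -54 * (-(5/12 * x * (1 - x)) * e1 + (-455/1728 * x + 35/144 * x ^ 2) * e2)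
  · linear_combination -54 * ((x - 1) * (x + 1/12) * e3 - 7/12 * x * (1 - x) * e4)
  · linear_combination -54 * (1 - x) *
      (-(5/12 * x * (1 - x)) * e3 + (-455/1728 * x + 35/144 * x ^ 2) * e4)

/-! ### Contiguous relations -/

lemma hc_down {a b c : ℝ} (ha : ∀ k : ℕ, a - 1 + k ≠ 0) (hb : b ≠ 0) (k : ℕ) :
    hc (a - 1) (b + 1) c k = hc a b c k * ((a - 1) * (b + k) / ((a - 1 + k) * b)) := by
  have h1 := poch_shift (a - 1) k
  have h2 := poch_shift b k
  rw [sub_add_cancel] at h1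
  have := ha k
  have e1 : poch (a - 1) k = (a - 1) * poch a k / (a - 1 + k) := by
    rw [eq_div_iff this, h1]
  have e2 : poch (b + 1) k = poch b k * (b + k) / b := by
    rw [eq_div_iff hb, ← h2]; ring
  simp only [hc]
  rw [e1, e2, div_mul_div_comm, div_div, div_mul_div_comm]
  congr 1 <;> ring

lemma hc_up {a b c : ℝ} (hb : ∀ k : ℕ, b - 1 + k ≠ 0) (ha : a ≠ 0) (k : ℕ) :
    hc (a + 1) (b - 1) c k = hc a b c k * ((a + k) * (b - 1) / (a * (b - 1 + k))) := by
  have h : ∀ a b : ℝ, hc a b c k = hc b a c k := fun a b => by simp only [hc, mul_comm (poch a k)]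
  rw [h, hc_down hb ha, h b a]
  congr 2 <;> ring

/-- The prefactor of `Ũ_n`. -/
def KU (n : ℕ) : ℝ := (-1 : ℝ) ^ n * poch (11/12) n * poch (17/12) n / poch 2 (2 * n)
/-- The prefactor of `Ỹ_n`. -/
def KY (n : ℕ) : ℝ := (-1 : ℝ) ^ n * poch (19/12) n * poch (25/12) n / poch 2 (2 * n)

lemma poch_pos {a : ℝ} (ha : 0 < a) (n : ℕ) : 0 < poch a n :=
  Finset.prod_pos fun i _ => by positivity

lemma KU_succ (n : ℕ) : KU (n + 1) =
    KU n * (-((11/12 + (n:ℝ)) * (17/12 + n) / ((2 + 2 * n) * (3 + 2 * n)))) := by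
  simp only [KU, show 2 * (n + 1) = 2 * n + 1 + 1 by ring, poch_succ]
  have := (poch_pos (a := 2) (by norm_num) (2 * n)).ne'
  have h2 : (2 + 2 * (n:ℝ)) ≠ 0 := by positivity
  have h3 : (3 + 2 * (n:ℝ)) ≠ 0 := by positivity
  have h4 : (2 + (2 * (n:ℝ) + 1)) ≠ 0 := by positivity
  push_cast
  field_simp
  ring

lemma KY_succ (n : ℕ) : KY (n + 1) =
    KY n * (-((19/12 + (n:ℝ)) * (25/12 + n) / ((2 + 2 * n) * (3 + 2 * n)))) := by
  simp only [KY, show 2 * (n + 1) = 2 * n + 1 + 1 by ring, poch_succ]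
  have := (poch_pos (a := 2) (by norm_num) (2 * n)).ne'
  have h2 : (2 + 2 * (n:ℝ)) ≠ 0 := by positivity
  have h3 : (3 + 2 * (n:ℝ)) ≠ 0 := by positivity
  have h4 : (2 + (2 * (n:ℝ) + 1)) ≠ 0 := by positivity
  push_cast
  field_simp
  ring

lemma KU_zero : KU 0 = 1 := by simp [KU, poch_zero]
lemma KY_zero : KY 0 = 1 := by simp [KY, poch_zero]

/-- Coefficients of `Ũ_n`. -/
def cU (n : ℕ) : ℕ → ℝ := hc (-(n:ℝ) - 7/12) ((n:ℝ) + 17/12) (1/3)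
/-- Coefficients of `Ỹ_n`. -/
def cY (n : ℕ) : ℕ → ℝ := hc (-(n:ℝ) + 1/12) ((n:ℝ) + 25/12) (5/3)

lemma Ut_eq (n : ℕ) (x : ℝ) :
    Ut ((1:ℝ)/2) (-(2:ℝ)/3) ((7:ℝ)/12) n x = KU n * PS (cU n) x := by
  have h1 := (poch_pos (a := 19/12) (by norm_num) n).ne'
  have h2 := (poch_pos (a := 2) (by norm_num) (2 * n)).ne'
  simp only [Ut, Ufun, hyp_eq, cU, KU]
  rw [show (7:ℝ)/12 + 1 = 19/12 by norm_num, show (1:ℝ)/2 + -2/3 + 7/12 + 1 = 17/12 by norm_num,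
    show (1:ℝ)/2 + -2/3 + 2 * (7/12) + 1 = 2 by norm_num,
    show -(2:ℝ)/3 + 7/12 + 1 = 11/12 by norm_num, show 1 + -(2:ℝ)/3 = 1/3 by norm_num,
    show (n:ℝ) + 1/2 + -2/3 + 7/12 + 1 = n + 17/12 by ring]
  field_simp

lemma Yt_eq (n : ℕ) (x : ℝ) :
    Yt ((1:ℝ)/2) (-(2:ℝ)/3) ((7:ℝ)/12) n x = KY n * PS (cY n) x := by
  have h1 := (poch_pos (a := 17/12) (by norm_num) n).ne'
  have h2 := (poch_pos (a := 2) (by norm_num) (2 * n)).ne'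
  simp only [Yt, Yfun, hyp_eq, cY, KY]
  rw [show (7:ℝ)/12 + 1 = 19/12 by norm_num, show (1:ℝ)/2 + -2/3 + 7/12 + 1 = 17/12 by norm_num,
    show (1:ℝ)/2 + -2/3 + 2 * (7/12) + 1 = 2 by norm_num,
    show (1:ℝ)/2 + 7/12 + 1 = 25/12 by norm_num, show 1 - -(2:ℝ)/3 = 5/3 by norm_num,
    show (n:ℝ) + 1/2 + 7/12 + 1 = n + 25/12 by ring,
    show -(n:ℝ) - -2/3 - 7/12 = -n + 1/12 by ring]
  field_simp

lemma ne_of_twelfth {r : ℝ} (z : ℤ) (h : 12 * r = z) (hz : ¬ (12 ∣ z)) (k : ℤ) : r + k ≠ 0 := by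
  intro h0
  have h1 : (z : ℝ) = ((12 * (-k) : ℤ) : ℝ) := by push_cast; linarith
  exact hz ⟨-k, by exact_mod_cast h1⟩

/-- Coefficient of the three-term recurrence. -/
def rA (n : ℕ) : ℝ := 2 * (((n : ℝ) + 2)^2 - 29/144) / (4 * ((n : ℝ) + 2)^2 - 1)
/-- Coefficient of the three-term recurrence. -/
def rB (n : ℕ) : ℝ := (((n : ℝ) + 2) - 13/12) * (((n : ℝ) + 2) - 7/12) * (((n : ℝ) + 2) - 5/12)
          * (((n : ℝ) + 2) + 1/12)
         / (2 * ((n : ℝ) + 2) * (2 * ((n : ℝ) + 2) - 1)^2 * (2 * ((n : ℝ) + 2) - 2))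

lemma rA_eq (n : ℕ) : rA n = 2 * (((n : ℝ) + 2)^2 - 29/144) / ((2 * n + 3) * (2 * n + 5)) := by
  rw [rA]; congr 1; ring
lemma rB_eq (n : ℕ) : rB n = ((n : ℝ) + 11/12) * (n + 17/12) * (n + 19/12) * (n + 25/12)
    / (4 * ((n : ℝ) + 2) * (2 * n + 3)^2 * (n + 1)) := by
  rw [rB]; congr 1 <;> ring

lemma recU (n : ℕ) {x : ℝ} (hx : |x| < 1) :
    KU (n + 2) * PS (cU (n + 2)) x =
      (x - rA n) * (KU (n + 1) * PS (cU (n + 1)) x) - rB n * (KU n * PS (cU n) x) := by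
  have g : ∀ m, Good (cU m) := fun m => good_hc _ _ _
  have hna : ∀ k : ℤ, -((n:ℝ) + 1) - 7/12 + k ≠ 0 := fun k => by
    have := ne_of_twelfth (r := -((n:ℝ) + 1) - 7/12) (-12 * (n + 1) - 7) (by push_cast; ring)
      (by omega)
    exact this k
  have e2 : cU (n + 2) = hc (-((n:ℝ) + 1) - 7/12 - 1) ((n:ℝ) + 1 + 17/12 + 1) (1/3) := by
    simp only [cU]; push_cast; congr 1 <;> ring
  have e0 : cU n = hc (-((n:ℝ) + 1) - 7/12 + 1) ((n:ℝ) + 1 + 17/12 - 1) (1/3) := by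
    simp only [cU]; congr 1 <;> ring
  have e1 : cU (n + 1) = hc (-((n:ℝ) + 1) - 7/12) ((n:ℝ) + 1 + 17/12) (1/3) := by
    simp only [cU]; push_cast; rfl
  have hb1 : ∀ k : ℕ, (n:ℝ) + 1 + 17/12 - 1 + k ≠ 0 := fun k => by
    have : (0:ℝ) < (n:ℝ) + 1 + 17/12 - 1 + k := by
      have : (0:ℝ) ≤ (n:ℝ) + k := by positivity
      linarith
    exact this.ne'
  have ha1 : ∀ k : ℕ, -((n:ℝ) + 1) - 7/12 - 1 + k ≠ 0 := fun k => by
    have := hna (k - 1); push_cast at this; intro h; apply this; linarith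
  have ha0 : -((n:ℝ) + 1) - 7/12 ≠ 0 := by simpa using hna 0
  have hb0 : (n:ℝ) + 1 + 17/12 ≠ 0 := by positivity
  have main : PS (fun k => (KU (n + 2) * cU (n + 2) k + rA n * KU (n + 1) * cU (n + 1) k)
      + rB n * KU n * cU n k) x = x * PS (fun k => KU (n + 1) * cU (n + 1) k) x := by
    have h2 : ((n:ℝ) + 2) ≠ 0 := by positivity
    have h3 : (2 * (n:ℝ) + 3) ≠ 0 := by positivity
    have h5 : (2 * (n:ℝ) + 5) ≠ 0 := by positivity
    have h1 : ((n:ℝ) + 1) ≠ 0 := by positivity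
    refine PS_eq_mul ((((g _).smul _).add ((g _).smul _)).add ((g _).smul _)) ?_ (fun k => ?_) hx
    · simp only [cU, hc_zero, KU_succ, rA_eq, rB_eq]
      push_cast
      rw [show (2 + 2 * (n:ℝ)) = 2 * (n + 1) by ring, show (3 + 2 * (n:ℝ)) = 2 * n + 3 by ring,
        show (2 + 2 * ((n:ℝ) + 1)) = 2 * (n + 2) by ring,
        show (3 + 2 * ((n:ℝ) + 1)) = 2 * n + 5 by ring]
      field_simp
      ring
    · rw [e2, e1, e0, hc_down ha1 hb0, hc_up hb1 ha0, hc_succ, KU_succ, KU_succ, rA_eq, rB_eq]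
      have d1 := ha1 (k + 1)
      have d2 := hb1 (k + 1)
      have d3 : ((1:ℝ)/3 + k) ≠ 0 := by positivity
      have d4 : ((k:ℝ) + 1) ≠ 0 := by positivity
      have d5 : (-(n:ℝ) * 12 - 19) ≠ 0 := by intro h; apply ha0; linarith
      push_cast at d1 d2 ⊢
      rw [show (2 + 2 * (n:ℝ)) = 2 * (n + 1) by ring, show (3 + 2 * (n:ℝ)) = 2 * n + 3 by ring,
        show (2 + 2 * ((n:ℝ) + 1)) = 2 * (n + 2) by ring,
        show (3 + 2 * ((n:ℝ) + 1)) = 2 * n + 5 by ring]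
      generalize hX : -((n:ℝ) + 1) - 7/12 - 1 + ((k:ℝ) + 1) = X at *
      generalize hY : (n:ℝ) + 1 + 17/12 - 1 + ((k:ℝ) + 1) = Y at *
      generalize hA : -((n:ℝ) + 1) - 7/12 = A at *
      generalize hB : (n:ℝ) + 1 + 17/12 = B at *
      field_simp
      subst hX hY hA hB
      ring
  rw [PS_add (((g _).smul _).add ((g _).smul _)) ((g _).smul _) hx,
    PS_add ((g _).smul _) ((g _).smul _) hx, PS_smul, PS_smul, PS_smul, PS_smul] at main
  linear_combination main

lemma recY (n : ℕ) {x : ℝ} (hx : |x| < 1) :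
    KY (n + 2) * PS (cY (n + 2)) x =
      (x - rA n) * (KY (n + 1) * PS (cY (n + 1)) x) - rB n * (KY n * PS (cY n) x) := by
  have g : ∀ m, Good (cY m) := fun m => good_hc _ _ _
  have hna : ∀ k : ℤ, -((n:ℝ) + 1) + 1/12 + k ≠ 0 := fun k => by
    have := ne_of_twelfth (r := -((n:ℝ) + 1) + 1/12) (-12 * (n + 1) + 1) (by push_cast; ring)
      (by omega)
    exact this k
  have e2 : cY (n + 2) = hc (-((n:ℝ) + 1) + 1/12 - 1) ((n:ℝ) + 1 + 25/12 + 1) (5/3) := by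
    simp only [cY]; push_cast; congr 1 <;> ring
  have e0 : cY n = hc (-((n:ℝ) + 1) + 1/12 + 1) ((n:ℝ) + 1 + 25/12 - 1) (5/3) := by
    simp only [cY]; congr 1 <;> ring
  have e1 : cY (n + 1) = hc (-((n:ℝ) + 1) + 1/12) ((n:ℝ) + 1 + 25/12) (5/3) := by
    simp only [cY]; push_cast; rfl
  have hb1 : ∀ k : ℕ, (n:ℝ) + 1 + 25/12 - 1 + k ≠ 0 := fun k => by
    have : (0:ℝ) < (n:ℝ) + 1 + 25/12 - 1 + k := by
      have : (0:ℝ) ≤ (n:ℝ) + k := by positivity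
      linarith
    exact this.ne'
  have ha1 : ∀ k : ℕ, -((n:ℝ) + 1) + 1/12 - 1 + k ≠ 0 := fun k => by
    have := hna (k - 1); push_cast at this; intro h; apply this; linarith
  have ha0 : -((n:ℝ) + 1) + 1/12 ≠ 0 := by simpa using hna 0
  have hb0 : (n:ℝ) + 1 + 25/12 ≠ 0 := by positivity
  have main : PS (fun k => (KY (n + 2) * cY (n + 2) k + rA n * KY (n + 1) * cY (n + 1) k)
      + rB n * KY n * cY n k) x = x * PS (fun k => KY (n + 1) * cY (n + 1) k) x := by
    have h2 : ((n:ℝ) + 2) ≠ 0 := by positivity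
    have h3 : (2 * (n:ℝ) + 3) ≠ 0 := by positivity
    have h5 : (2 * (n:ℝ) + 5) ≠ 0 := by positivity
    have h1 : ((n:ℝ) + 1) ≠ 0 := by positivity
    refine PS_eq_mul ((((g _).smul _).add ((g _).smul _)).add ((g _).smul _)) ?_ (fun k => ?_) hx
    · simp only [cY, hc_zero, KY_succ, rA_eq, rB_eq]
      push_cast
      rw [show (2 + 2 * (n:ℝ)) = 2 * (n + 1) by ring, show (3 + 2 * (n:ℝ)) = 2 * n + 3 by ring,
        show (2 + 2 * ((n:ℝ) + 1)) = 2 * (n + 2) by ring,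
        show (3 + 2 * ((n:ℝ) + 1)) = 2 * n + 5 by ring]
      field_simp
      ring
    · rw [e2, e1, e0, hc_down ha1 hb0, hc_up hb1 ha0, hc_succ, KY_succ, KY_succ, rA_eq, rB_eq]
      have d1 := ha1 (k + 1)
      have d2 := hb1 (k + 1)
      have d3 : ((5:ℝ)/3 + k) ≠ 0 := by positivity
      have d4 : ((k:ℝ) + 1) ≠ 0 := by positivity
      have d5 : (-(n:ℝ) * 12 - 11) ≠ 0 := by intro h; apply ha0; linarith
      push_cast at d1 d2 ⊢
      rw [show (2 + 2 * (n:ℝ)) = 2 * (n + 1) by ring, show (3 + 2 * (n:ℝ)) = 2 * n + 3 by ring,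
        show (2 + 2 * ((n:ℝ) + 1)) = 2 * (n + 2) by ring,
        show (3 + 2 * ((n:ℝ) + 1)) = 2 * n + 5 by ring]
      generalize hX : -((n:ℝ) + 1) + 1/12 - 1 + ((k:ℝ) + 1) = X at *
      generalize hY : (n:ℝ) + 1 + 25/12 - 1 + ((k:ℝ) + 1) = Y at *
      generalize hA : -((n:ℝ) + 1) + 1/12 = A at *
      generalize hB : (n:ℝ) + 1 + 25/12 = B at *
      field_simp
      subst hX hY hA hB
      ring
  rw [PS_add (((g _).smul _).add ((g _).smul _)) ((g _).smul _) hx,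
    PS_add ((g _).smul _) ((g _).smul _) hx, PS_smul, PS_smul, PS_smul, PS_smul] at main
  linear_combination main


lemma hc_c {a b c : ℝ} (hcn : ∀ k : ℕ, c - 1 + k ≠ 0) (k : ℕ) :
    (c - 1) * hc a b (c - 1) k = (c - 1 + k) * hc a b c k := by
  have h1 := poch_shift (c - 1) k
  rw [sub_add_cancel] at h1
  have h2 := poch_ne hcn k
  have h3 := hcn k
  have h0 : c - 1 ≠ 0 := by simpa using hcn 0
  have h4 : poch c k ≠ 0 := by
    intro h; rw [h, mul_zero] at h1; exact mul_ne_zero h2 h3 h1.symm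
  have h5 : (Nat.factorial k : ℝ) ≠ 0 := by positivity
  simp only [hc]
  rw [← mul_div_assoc, ← mul_div_assoc, div_eq_div_iff (mul_ne_zero h2 h5) (mul_ne_zero h4 h5)]
  linear_combination poch a k * poch b k * (Nat.factorial k : ℝ) * h1

lemma hc_a {a b c : ℝ} (k : ℕ) : a * hc (a + 1) b c k = (a + k) * hc a b c k := by
  simp only [hc]
  rw [← mul_div_assoc, ← mul_div_assoc]
  congr 1
  linear_combination poch b k * poch_shift a k

lemma Cfun_eq {x : ℝ} (hx : |x| < 1) :
    Cfun x = -(1/60) * (25 * PS tP x - 72 * (x * PS (dc tP) x)) := by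
  have h : PS (hc (-5/12) (-5/12) (-1/3)) x = PS (fun k => tP k + (-3) * ((k:ℝ) * tP k)) x := by
    congr 1; ext k
    have := hc_c (a := -5/12) (b := -5/12) (c := 2/3) (fun k => by
      have := ne_of_twelfth (r := 2/3 - 1) (-4) (by norm_num) (by norm_num) k
      exact_mod_cast this) k
    rw [show (2:ℝ)/3 - 1 = -1/3 by norm_num] at this
    simp only [tP]; linear_combination (-3) * this
  rw [PS_add gP (gP.theta.smul _) hx, PS_smul, PS_theta gP hx] at h
  simp only [Cfun, hyp_eq, h]
  rw [← tP]; ring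

lemma Dfun_eq {x : ℝ} (hx : |x| < 1) :
    Dfun x = (91/384) * x * (72 * (x * PS (dc tQ) x) - PS tQ x) := by
  have h : PS (hc (-1/12) (-1/12) (1/3)) x = PS (fun k => tQ k + 3 * ((k:ℝ) * tQ k)) x := by
    congr 1; ext k
    have := hc_c (a := -1/12) (b := -1/12) (c := 4/3) (fun k => by
      have := ne_of_twelfth (r := 4/3 - 1) 4 (by norm_num) (by norm_num) k
      exact_mod_cast this) k
    rw [show (4:ℝ)/3 - 1 = 1/3 by norm_num] at this
    simp only [tQ]; linear_combination 3 * this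
  have h' : PS (hc (11/12) (-1/12) (4/3)) x = PS (fun k => tQ k + (-12) * ((k:ℝ) * tQ k)) x := by
    congr 1; ext k
    have := hc_a (a := -1/12) (b := -1/12) (c := 4/3) k
    rw [show -(1:ℝ)/12 + 1 = 11/12 by norm_num] at this
    simp only [tQ]; linear_combination (-12) * this
  rw [PS_add gQ (gQ.theta.smul _) hx, PS_smul, PS_theta gQ hx] at h h'
  simp only [Dfun, hyp_eq, h, h']
  ring

lemma cU_zero : cU 0 = tU := by
  simp only [cU, tU]; norm_num
lemma cY_zero : cY 0 = tY := by
  simp only [cY, tY]; norm_num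

lemma firstU {x : ℝ} (hx : |x| < 1) : KU 1 * PS (cU 1) x =
    -(1/2) * (187/432 * PS tU x - 17/12 * x * PS tU x + (1 - x) * (x * PS (dc tU) x)) := by
  have g1 : Good (cU 1) := good_hc _ _ _
  have hd : ∀ k, cU 1 k = tU k * ((-7/12 - 1) * (17/12 + k) / ((-7/12 - 1 + k) * (17/12))) := by
    intro k
    rw [tU, ← hc_down (fun k => by
      have := ne_of_twelfth (r := -7/12 - 1) (-19) (by norm_num) (by norm_num) k
      exact_mod_cast this) (by norm_num), cU]
    norm_num
  have main : PS (fun k => (187/432 * cU 1 k + (-187/432) * tU k) + (-1) * ((k:ℝ) * tU k)) x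
      = x * PS (fun k => (-17/12) * tU k + (-1) * ((k:ℝ) * tU k)) x := by
    refine PS_eq_mul (((g1.smul _).add (gU.smul _)).add (gU.theta.smul _)) ?_ (fun k => ?_) hx
    · simp [cU, tU, hc_zero]; norm_num
    · have d : (-7/12 - 1 + ((k:ℝ) + 1)) ≠ 0 := by
        have := ne_of_twelfth (r := -7/12 - 1 + 1) (-7) (by norm_num) (by norm_num) k
        push_cast at this; intro h; apply this; linarith
      have d3 : ((1:ℝ)/3 + k) ≠ 0 := by positivity
      have d4 : ((k:ℝ) + 1) ≠ 0 := by positivity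
      rw [hd (k + 1), tU, hc_succ]
      push_cast
      generalize hX : -7/12 - 1 + ((k:ℝ) + 1) = X at *
      field_simp
      subst hX
      ring
  rw [PS_add ((g1.smul _).add (gU.smul _)) (gU.theta.smul _) hx, PS_add (g1.smul _) (gU.smul _) hx,
    PS_add (gU.smul _) (gU.theta.smul _) hx, PS_smul, PS_smul, PS_smul, PS_smul,
    PS_theta gU hx] at main
  have hK : KU 1 = -187/864 := by rw [KU_succ 0, KU_zero]; norm_num
  rw [hK]
  linear_combination (-1/2) * main

lemma firstY {x : ℝ} (hx : |x| < 1) : KY 1 * PS (cY 1) x =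
    -(1/2) * (475/432 * PS tY x - 25/12 * x * PS tY x + (1 - x) * (x * PS (dc tY) x)) := by
  have g1 : Good (cY 1) := good_hc _ _ _
  have hd : ∀ k, cY 1 k = tY k * ((1/12 - 1) * (25/12 + k) / ((1/12 - 1 + k) * (25/12))) := by
    intro k
    rw [tY, ← hc_down (fun k => by
      have := ne_of_twelfth (r := 1/12 - 1) (-11) (by norm_num) (by norm_num) k
      exact_mod_cast this) (by norm_num), cY]
    norm_num
  have main : PS (fun k => (475/432 * cY 1 k + (-475/432) * tY k) + (-1) * ((k:ℝ) * tY k)) x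
      = x * PS (fun k => (-25/12) * tY k + (-1) * ((k:ℝ) * tY k)) x := by
    refine PS_eq_mul (((g1.smul _).add (gY.smul _)).add (gY.theta.smul _)) ?_ (fun k => ?_) hx
    · simp [cY, tY, hc_zero]; norm_num
    · have d : (1/12 - 1 + ((k:ℝ) + 1)) ≠ 0 := by
        have := ne_of_twelfth (r := 1/12 - 1 + 1) 1 (by norm_num) (by norm_num) k
        push_cast at this; intro h; apply this; linarith
      have d3 : ((5:ℝ)/3 + k) ≠ 0 := by positivity
      have d4 : ((k:ℝ) + 1) ≠ 0 := by positivity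
      rw [hd (k + 1), tY, hc_succ]
      push_cast
      generalize hX : 1/12 - 1 + ((k:ℝ) + 1) = X at *
      field_simp
      subst hX
      ring
  rw [PS_add ((g1.smul _).add (gY.smul _)) (gY.theta.smul _) hx, PS_add (g1.smul _) (gY.smul _) hx,
    PS_add (gY.smul _) (gY.theta.smul _) hx, PS_smul, PS_smul, PS_smul, PS_smul,
    PS_theta gY hx] at main
  have hK : KY 1 = -475/864 := by rw [KY_succ 0, KY_zero]; norm_num
  rw [hK]
  linear_combination (-1/2) * main


/-! ### Assembly -/

lemma base0 {x : ℝ} (hx0 : 0 ≤ x) (hx1 : x < 1) :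
    x - 5/12 = Cfun x * (KU 0 * PS (cU 0) x) + Dfun x * (KY 0 * PS (cY 0) x) := by
  have hx : |x| < 1 := by rwa [abs_of_nonneg hx0]
  obtain ⟨e1, e2, -, -⟩ := dual hx0 hx1
  rw [Cfun_eq hx, Dfun_eq hx, KU_zero, KY_zero, cU_zero, cY_zero]
  linear_combination (25/60) * e1 - (72/60) * e2

lemma base1 {x : ℝ} (hx0 : 0 ≤ x) (hx1 : x < 1) :
    x^2 - (205/216) * x + 935/10368
      = Cfun x * (KU 1 * PS (cU 1) x) + Dfun x * (KY 1 * PS (cY 1) x) := by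
  have hx : |x| < 1 := by rwa [abs_of_nonneg hx0]
  obtain ⟨e1, e2, e3, e4⟩ := dual hx0 hx1
  rw [Cfun_eq hx, Dfun_eq hx, firstU hx, firstY hx]
  linear_combination (-1/2) * (187/432 - 17/12 * x) * ((25/60) * e1 - (72/60) * e2)
    + (-1/2) * ((25/60) * (1 - x) * e3 - (72/60) * e4)

lemma atkin_all {x : ℝ} (hx0 : 0 ≤ x) (hx1 : x < 1) : ∀ n : ℕ,
    Atkin (n + 1) x = Cfun x * (KU n * PS (cU n) x) + Dfun x * (KY n * PS (cY n) x)
  | 0 => by rw [← base0 hx0 hx1]; simp [Atkin]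
  | 1 => by rw [← base1 hx0 hx1]; simp [Atkin]
  | n + 2 => by
    have hx : |x| < 1 := by rwa [abs_of_nonneg hx0]
    have h0 := atkin_all hx0 hx1 n
    have h1 := atkin_all hx0 hx1 (n + 1)
    have hA : Atkin (n + 3) x = (x - rA n) * Atkin (n + 2) x - rB n * Atkin (n + 1) x := by
      rw [Atkin, rA, rB]
    rw [show n + 2 + 1 = n + 3 by ring, hA, recU n hx, recY n hx, h0, h1]
    ring

theorem atkin_eq_CU_add_DY (n : ℕ) (x : ℝ) (hx0 : 0 ≤ x) (hx1 : x < 1) :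
    Atkin (n + 1) x =
      Cfun x * Ut ((1:ℝ)/2) (-(2:ℝ)/3) ((7:ℝ)/12) n x
        + Dfun x * Yt ((1:ℝ)/2) (-(2:ℝ)/3) ((7:ℝ)/12) n x := by
  rw [Ut_eq, Yt_eq]
  exact atkin_all hx0 hx1 n
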